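/- For K ≥ 1, define T_K = Σ_{k=1}^{K} σ_{k−1}/σ_0 and the weighted averages X_K = (1/T_K)·Σ_{k=1}^{K} (σ_{k−1}/σ_0)·x_k and Y_K⋆ = (1/T_K)·Σ_{k=1}^{K} (σ_{k−1}/σ_0)·y_k⋆. Then for every x ∈ dom g ∩ dom φ_X and every y⋆ ∈ dom h⋆ ∩ dom φ_{Y⋆}, the iterates of the accelerated nonlinear PDHG method for strongly convex problems satisfy T_K·(L(X_K, y⋆) − L(x, Y_K⋆)) ≤ Δ_0(x, y⋆) − (σ_K/σ_0)·Δ_K(x, y⋆). -/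

import Mathlib

open Filter Topology

/-!
Each PDHG half-step minimizes a function `F` for which `F - m φ` is convex, `φ` being the Bregman
kernel, so its minimizer `a` satisfies `F a + m D(x, a) ≤ F x`. In the primal half-step
`m = γ + 1 / τ`, the gain `γ` coming from the relative strong convexity of `g`. Adding the two
inequalities bounds the Lagrangian gap at the new iterate by `Δ_k` minus an energy with weights
`(1, τ / (1 + γ τ), σ)`; the only leftover, a coupling term, is absorbed by Young's inequality since
`M² σ τ ≤ 1`, where `M` bounds the norm of the coupling. As `θ_{k+1}² (1 + γ τ_k) = 1`, that energy
is `Δ_{k+1} / θ_{k+1}`, so the gaps weighted by `σ_k / σ_0` telescope, and Jensen's inequality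
passes to the averages.
-/

theorem sum_Icc_le_sub_of_succ_le_sub {α : Type*} [AddCommGroup α] [PartialOrder α]
    [IsOrderedAddMonoid α] {f a : ℕ → α} (h : ∀ k, f (k + 1) ≤ a k - a (k + 1)) (n : ℕ) :
    ∑ k ∈ Finset.Icc 1 n, f k ≤ a 0 - a n := by
  induction n with
  | zero => simp
  | succ n ih =>
    rw [Finset.sum_Icc_succ_top (Nat.le_add_left 1 n)]
    exact (add_le_add ih (h n)).trans_eq (sub_add_sub_cancel _ _ _)

theorem nonneg_of_isMinOn_Icc_left {f : ℝ → ℝ} {a b d : ℝ} (hab : a < b)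
    (hmin : IsMinOn f (Set.Icc a b) a) (hf : HasDerivWithinAt f d (Set.Icc a b) a) : 0 ≤ d := by
  have hcone : b - a ∈ posTangentConeAt (Set.Icc a b) a :=
    sub_mem_posTangentConeAt_of_segment_subset (segment_eq_Icc hab.le).subset
  have hslope := hmin.localize.hasFDerivWithinAt_nonneg hf.hasFDerivWithinAt hcone
  exact nonneg_of_mul_nonneg_right (by simpa using hslope) (sub_pos.2 hab)

section BregmanDivergence

variable {E : Type*} [AddCommGroup E] [Module ℝ E]

/-- The Bregman divergence `D(x, a)` of the kernel `φ`, where `φ' a` is the Gateaux derivative of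
`φ` at `a`. -/
def bregmanDiv (φ : E → ℝ) (φ' : E → E →ₗ[ℝ] ℝ) (x a : E) : ℝ :=
  φ x - φ a - φ' a (x - a)

variable {C : Set E} {φ : E → ℝ} {φ' : E → E →ₗ[ℝ] ℝ} {a b x : E}

theorem add_mul_bregmanDiv_le_of_isMinOn {F : E → ℝ} {m : ℝ}
    (hF : ConvexOn ℝ C fun y => F y - m * φ y) (ha : a ∈ C) (hmin : IsMinOn F C a) (hx : x ∈ C)
    (hφ' : HasLineDerivAt ℝ φ (φ' a (x - a)) a (x - a)) :
    F a + m * bregmanDiv φ φ' x a ≤ F x := by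
  set H : E → ℝ := fun y => F y - m * φ y with hH
  -- `upper t` dominates `F` on the segment from `a` to `x` and agrees with `F` at `a`.
  let upper : ℝ → ℝ := fun t => H a + t * (H x - H a) + m * φ (a + t • (x - a))
  have hupper : HasDerivAt upper (1 * (H x - H a) + m * φ' a (x - a)) 0 :=
    (((hasDerivAt_id (0 : ℝ)).mul_const _).const_add _).add (HasDerivAt.const_mul m hφ')
  have hderiv : 0 ≤ 1 * (H x - H a) + m * φ' a (x - a) := by
    refine nonneg_of_isMinOn_Icc_left one_pos (isMinOn_iff.2 fun t ht => ?_)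
      hupper.hasDerivWithinAt
    have hpoint : (1 - t) • a + t • x = a + t • (x - a) := by module
    have hmem := hF.1 ha hx (sub_nonneg.2 ht.2) ht.1 (sub_add_cancel 1 t)
    have hconv := hF.2 ha hx (sub_nonneg.2 ht.2) ht.1 (sub_add_cancel 1 t)
    rw [hpoint] at hmem hconv
    have hFa : F a ≤ F (a + t • (x - a)) := hmin hmem
    simp only [upper, hH, smul_eq_mul, zero_mul, zero_smul, add_zero] at hconv ⊢
    linarith
  simp only [hH] at hderiv
  simp only [bregmanDiv]
  linarith

theorem bregman_three_point_le {G : E → ℝ} {γ c : ℝ} (l : E →ₗ[ℝ] ℝ)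
    (hG : ConvexOn ℝ C fun y => G y - γ * φ y) (ha : a ∈ C)
    (hmin : IsMinOn (fun y => G y + l y + c * bregmanDiv φ φ' y b) C a) (hx : x ∈ C)
    (hφ' : HasLineDerivAt ℝ φ (φ' a (x - a)) a (x - a)) :
    G a + l a + c * bregmanDiv φ φ' a b + (γ + c) * bregmanDiv φ φ' x a ≤
      G x + l x + c * bregmanDiv φ φ' x b := by
  refine add_mul_bregmanDiv_le_of_isMinOn ?_ ha hmin hx hφ'
  have hlin : ConvexOn ℝ C (l - c • φ' b) := LinearMap.convexOn _ hG.1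
  refine ((hG.add hlin).add_const (c * (φ' b b - φ b))).congr fun y _ => ?_
  simp only [bregmanDiv, Pi.add_apply, LinearMap.sub_apply, LinearMap.smul_apply,
    map_sub, smul_eq_mul]
  ring

end BregmanDivergence

section StepSizes

/-- The step sizes of accelerated nonlinear PDHG for a strong convexity modulus `γ` and a coupling
of norm at most `M`. -/
structure AcceleratedStepSizes (γ M : ℝ) (θ τ σ : ℕ → ℝ) : Prop where
  gamma_nonneg : 0 ≤ γ
  theta_zero_pos : 0 < θ 0
  theta_zero_le_one : θ 0 ≤ 1
  tau_zero_pos : 0 < τ 0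
  sigma_zero_pos : 0 < σ 0
  coupling_zero_le_one : M ^ 2 * σ 0 * τ 0 ≤ 1
  theta_succ : ∀ k, θ (k + 1) = 1 / √(1 + γ * τ k)
  tau_succ : ∀ k, τ (k + 1) = θ (k + 1) * τ k
  sigma_succ : ∀ k, σ (k + 1) = σ k / θ (k + 1)

namespace AcceleratedStepSizes

variable {γ M : ℝ} {θ τ σ : ℕ → ℝ} (steps : AcceleratedStepSizes γ M θ τ σ)
include steps

theorem tau_pos : ∀ k, 0 < τ k
  | 0 => steps.tau_zero_pos
  | k + 1 => by
    have hτ := tau_pos k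
    have hγ := steps.gamma_nonneg
    rw [steps.tau_succ, steps.theta_succ]
    positivity

theorem one_le_one_add_gamma_mul_tau (k : ℕ) : 1 ≤ 1 + γ * τ k :=
  le_add_of_nonneg_right (mul_nonneg steps.gamma_nonneg (steps.tau_pos k).le)

theorem theta_pos : ∀ k, 0 < θ k
  | 0 => steps.theta_zero_pos
  | k + 1 => by
    rw [steps.theta_succ]
    exact one_div_pos.2 (Real.sqrt_pos.2 (by linarith [steps.one_le_one_add_gamma_mul_tau k]))

theorem theta_le_one : ∀ k, θ k ≤ 1
  | 0 => steps.theta_zero_le_one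
  | k + 1 => by
    rw [steps.theta_succ, one_div]
    exact inv_le_one_of_one_le₀ (Real.one_le_sqrt.2 (steps.one_le_one_add_gamma_mul_tau k))

theorem sigma_pos : ∀ k, 0 < σ k
  | 0 => steps.sigma_zero_pos
  | k + 1 => by
    rw [steps.sigma_succ]
    exact div_pos (sigma_pos k) (steps.theta_pos _)

theorem coupling_le_one : ∀ k, M ^ 2 * σ k * τ k ≤ 1
  | 0 => steps.coupling_zero_le_one
  | k + 1 => by
    have hθ := (steps.theta_pos (k + 1)).ne'
    calc M ^ 2 * σ (k + 1) * τ (k + 1) = M ^ 2 * σ k * τ k := by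
          rw [steps.sigma_succ, steps.tau_succ]; field_simp
      _ ≤ 1 := coupling_le_one k

theorem theta_succ_sq_mul (k : ℕ) : θ (k + 1) ^ 2 * (1 + γ * τ k) = 1 := by
  have hpos : 0 < 1 + γ * τ k := by linarith [steps.one_le_one_add_gamma_mul_tau k]
  rw [steps.theta_succ, div_pow, one_pow, Real.sq_sqrt hpos.le, one_div_mul_cancel hpos.ne']

theorem tau_succ_eq_div (k : ℕ) : τ (k + 1) = τ k / (1 + γ * τ k) / θ (k + 1) := by
  have hpos : 0 < 1 + γ * τ k := by linarith [steps.one_le_one_add_gamma_mul_tau k]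
  rw [steps.tau_succ, eq_div_iff (steps.theta_pos _).ne', eq_div_iff hpos.ne']
  linear_combination τ k * steps.theta_succ_sq_mul k

end AcceleratedStepSizes

end StepSizes

section SaddlePoint

variable {X Z : Type*} [AddCommGroup X] [Module ℝ X] [AddCommGroup Z] [Module ℝ Z]

/-- The Lagrangian of a saddle-point problem with bilinear coupling `B`; for an operator
`A : X → Y` take `Z = Y⋆` and `B x y = y (A x)`. -/
noncomputable def lagrangian (B : X →ₗ[ℝ] Z →ₗ[ℝ] ℝ) (g : X → ℝ) (h : Z → ℝ) (x : X) (y : Z) : ℝ :=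
  g x + B x y - h y

/-- One iteration of nonlinear PDHG from the primal point `x` and the dual points `y₀` (previous)
and `y` (current) to `(x', y')`. The sets `C` and `D` play the role of the effective domains, since
`g`, `h` and the divergences are real-valued. -/
structure IsPDHGStep (B : X →ₗ[ℝ] Z →ₗ[ℝ] ℝ) (C : Set X) (D : Set Z) (g : X → ℝ) (h : Z → ℝ)
    (DX : X → X → ℝ) (DZ : Z → Z → ℝ) (θ τ σ : ℝ) (x : X) (y₀ y : Z) (x' : X) (y' : Z) :
    Prop where
  primal : IsMinOn (fun z => g z + B z (y + θ • (y - y₀)) + 1 / τ * DX z x) C x'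
  dual : IsMaxOn (fun w => -h w + B x' w - 1 / σ * DZ w y) D y'

/-- The Lyapunov function `Δ` of PDHG with state `(x, y₀, y)`, `y₀` being the previous dual iterate,
evaluated at the comparison point `(p, q)`. -/
noncomputable def pdhgEnergy (B : X →ₗ[ℝ] Z →ₗ[ℝ] ℝ) (DX : X → X → ℝ) (DZ : Z → Z → ℝ) (θ τ σ : ℝ)
    (x : X) (y₀ y : Z) (p : X) (q : Z) : ℝ :=
  1 / τ * DX p x + 1 / σ * DZ q y + 1 / σ * DZ y y₀ + θ * B (p - x) (y - y₀)

variable {B : X →ₗ[ℝ] Z →ₗ[ℝ] ℝ} {g φ : X → ℝ} {h ψ : Z → ℝ} {φ' : X → X →ₗ[ℝ] ℝ}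
  {ψ' : Z → Z →ₗ[ℝ] ℝ}

theorem convexOn_lagrangian_left {C : Set X} (hg : ConvexOn ℝ C g) (y : Z) :
    ConvexOn ℝ C fun x => lagrangian B g h x y := by
  have hlin : ConvexOn ℝ C (B.flip y) := (B.flip y).convexOn hg.1
  exact ((hg.add hlin).add_const (-h y)).congr fun x _ => by simp [lagrangian, sub_eq_add_neg]

theorem concaveOn_lagrangian_right {D : Set Z} (hh : ConvexOn ℝ D h) (x : X) :
    ConcaveOn ℝ D (lagrangian B g h x) := by
  have hlin : ConcaveOn ℝ D (B x) := (B x).concaveOn hh.1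
  exact ((hlin.add_const (g x)).sub hh).congr fun y _ => by
    simp only [lagrangian, Pi.add_apply, Pi.sub_apply]; ring

theorem pdhgEnergy_smul (c θ τ σ : ℝ) (DX : X → X → ℝ) (DZ : Z → Z → ℝ) (x p : X) (y₀ y q : Z) :
    pdhgEnergy B DX DZ (c * θ) (τ / c) (σ / c) x y₀ y p q =
      c * pdhgEnergy B DX DZ θ τ σ x y₀ y p q := by
  simp only [pdhgEnergy, one_div_div]
  ring

theorem sum_mul_gap_centerMass_le {ι : Type*} {s : Finset ι} {w : ι → ℝ} {C : Set X} {D : Set Z}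
    {F : X → Z → ℝ} {u : ι → X} {v : ι → Z} {x : X} {y : Z}
    (hconv : ConvexOn ℝ C fun z => F z y) (hconc : ConcaveOn ℝ D (F x))
    (hw : ∀ i ∈ s, 0 ≤ w i) (hw_sum : 0 < ∑ i ∈ s, w i)
    (hu : ∀ i ∈ s, u i ∈ C) (hv : ∀ i ∈ s, v i ∈ D) :
    (∑ i ∈ s, w i) * (F (s.centerMass w u) y - F x (s.centerMass w v)) ≤
      ∑ i ∈ s, w i * (F (u i) y - F x (v i)) := by
  have hgap := sub_le_sub (hconv.map_centerMass_le hw hw_sum hu)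
    (hconc.le_map_centerMass hw hw_sum hv)
  refine (mul_le_mul_of_nonneg_left hgap hw_sum.le).trans_eq ?_
  simp only [Finset.centerMass, Function.comp_apply, smul_eq_mul, mul_sub,
    Finset.sum_sub_distrib, mul_inv_cancel_left₀ hw_sum.ne']

namespace IsPDHGStep

variable {C : Set X} {D : Set Z} {γ θ τ σ : ℝ} {x x' p : X} {y₀ y y' q : Z}

theorem primal_le {DZ : Z → Z → ℝ}
    (step : IsPDHGStep B C D g h (bregmanDiv φ φ') DZ θ τ σ x y₀ y x' y')
    (hg : ConvexOn ℝ C fun z => g z - γ * φ z) (hx' : x' ∈ C)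
    (hφ' : HasLineDerivAt ℝ φ (φ' x' (p - x')) x' (p - x')) (hp : p ∈ C) :
    g x' + B x' (y + θ • (y - y₀)) + 1 / τ * bregmanDiv φ φ' x' x
        + (γ + 1 / τ) * bregmanDiv φ φ' p x' ≤
      g p + B p (y + θ • (y - y₀)) + 1 / τ * bregmanDiv φ φ' p x :=
  bregman_three_point_le (B.flip (y + θ • (y - y₀))) hg hx' step.primal hp hφ'

theorem dual_le {DX : X → X → ℝ}
    (step : IsPDHGStep B C D g h DX (bregmanDiv ψ ψ') θ τ σ x y₀ y x' y')
    (hh : ConvexOn ℝ D h) (hy' : y' ∈ D)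
    (hψ' : HasLineDerivAt ℝ ψ (ψ' y' (q - y')) y' (q - y')) (hq : q ∈ D) :
    h y' - B x' y' + 1 / σ * bregmanDiv ψ ψ' y' y + 1 / σ * bregmanDiv ψ ψ' q y' ≤
      h q - B x' q + 1 / σ * bregmanDiv ψ ψ' q y := by
  have hmin : IsMinOn (fun w => h w + (-B x') w + 1 / σ * bregmanDiv ψ ψ' w y) D y' :=
    isMinOn_iff.2 fun w hw => by
      have := isMaxOn_iff.1 step.dual w hw
      simp only [LinearMap.neg_apply]
      linarith
  have hh₀ : ConvexOn ℝ D fun w => h w - 0 * ψ w := by simpa only [zero_mul, sub_zero] using hh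
  simpa [← sub_eq_add_neg] using bregman_three_point_le _ hh₀ hy' hmin hq hψ'

theorem lagrangian_sub_le
    (step : IsPDHGStep B C D g h (bregmanDiv φ φ') (bregmanDiv ψ ψ') θ τ σ x y₀ y x' y')
    (hτ : 0 < τ)
    (hg : ConvexOn ℝ C fun z => g z - γ * φ z) (hh : ConvexOn ℝ D h) (hx' : x' ∈ C) (hy' : y' ∈ D)
    (hφ' : HasLineDerivAt ℝ φ (φ' x' (p - x')) x' (p - x'))
    (hψ' : HasLineDerivAt ℝ ψ (ψ' y' (q - y')) y' (q - y'))
    (hcoupling : θ * B (x - x') (y - y₀) ≤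
      1 / τ * bregmanDiv φ φ' x' x + 1 / σ * bregmanDiv ψ ψ' y y₀)
    (hp : p ∈ C) (hq : q ∈ D) :
    lagrangian B g h x' q - lagrangian B g h p y' ≤
      pdhgEnergy B (bregmanDiv φ φ') (bregmanDiv ψ ψ') θ τ σ x y₀ y p q -
        pdhgEnergy B (bregmanDiv φ φ') (bregmanDiv ψ ψ') 1 (τ / (1 + γ * τ)) σ x' y y' p q := by
  have hprimal := step.primal_le hg hx' hφ' hp
  have hdual := step.dual_le hh hy' hψ' hq
  have hrate : 1 / (τ / (1 + γ * τ)) = γ + 1 / τ := by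
    field_simp
    ring
  simp only [lagrangian, pdhgEnergy, hrate]
  simp only [map_sub, map_add, map_smul, LinearMap.sub_apply, smul_eq_mul] at hprimal hcoupling ⊢
  linarith

end IsPDHGStep

end SaddlePoint

section Convergence

variable {X Z : Type*} [SeminormedAddCommGroup X] [NormedSpace ℝ X]
  [SeminormedAddCommGroup Z] [NormedSpace ℝ Z]

/-- `φ` is an admissible Bregman kernel with domain `S`: on the interior of `S` it is Gateaux
differentiable with derivative `φ'`, and it is `1`-strongly convex on `S`, expressed as a lower
bound on its divergence. -/
structure IsBregmanKernel (φ : X → ℝ) (φ' : X → X →ₗ[ℝ] ℝ) (S : Set X) : Prop where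
  hasLineDerivAt : ∀ a ∈ interior S, ∀ w, HasLineDerivAt ℝ φ (φ' a w) a w
  half_sq_norm_sub_le : ∀ x ∈ S, ∀ a ∈ interior S, 1 / 2 * ‖x - a‖ ^ 2 ≤ bregmanDiv φ φ' x a

variable {B : X →ₗ[ℝ] Z →ₗ[ℝ] ℝ} {g φ : X → ℝ} {h ψ : Z → ℝ} {φ' : X → X →ₗ[ℝ] ℝ}
  {ψ' : Z → Z →ₗ[ℝ] ℝ}

theorem abs_bilin_le_of_sq_mul_le_one {M τ σ : ℝ} (hB : ∀ x y, |B x y| ≤ M * ‖x‖ * ‖y‖)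
    (hτ : 0 < τ) (hσ : 0 < σ) (hM : M ^ 2 * σ * τ ≤ 1) (x : X) (y : Z) :
    |B x y| ≤ 1 / τ * (1 / 2 * ‖x‖ ^ 2) + 1 / σ * (1 / 2 * ‖y‖ ^ 2) := by
  have hyoung : 2 * (M * σ * ‖x‖) * ‖y‖ ≤ (M * σ * ‖x‖) ^ 2 + ‖y‖ ^ 2 := two_mul_le_add_sq _ _
  have hscale : M ^ 2 * σ ≤ 1 / τ := (le_div_iff₀ hτ).2 hM
  calc |B x y| ≤ M * ‖x‖ * ‖y‖ := hB x y
    _ = 1 / (2 * σ) * (2 * (M * σ * ‖x‖) * ‖y‖) := by field_simp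
    _ ≤ 1 / (2 * σ) * ((M * σ * ‖x‖) ^ 2 + ‖y‖ ^ 2) := by gcongr
    _ = M ^ 2 * σ * (1 / 2 * ‖x‖ ^ 2) + 1 / σ * (1 / 2 * ‖y‖ ^ 2) := by field_simp
    _ ≤ 1 / τ * (1 / 2 * ‖x‖ ^ 2) + 1 / σ * (1 / 2 * ‖y‖ ^ 2) := by gcongr

theorem IsBregmanKernel.mul_bilin_sub_le {S : Set X} {R : Set Z} (hφ : IsBregmanKernel φ φ' S)
    (hψ : IsBregmanKernel ψ ψ' R) {M θ τ σ : ℝ} (hB : ∀ x y, |B x y| ≤ M * ‖x‖ * ‖y‖)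
    (hθ : 0 ≤ θ) (hθ1 : θ ≤ 1) (hτ : 0 < τ) (hσ : 0 < σ) (hM : M ^ 2 * σ * τ ≤ 1)
    {x x' : X} {y y₀ : Z} (hx : x ∈ interior S) (hx' : x' ∈ S)
    (hy₀ : y₀ ∈ interior R) (hy : y ∈ R) :
    θ * B (x - x') (y - y₀) ≤ 1 / τ * bregmanDiv φ φ' x' x + 1 / σ * bregmanDiv ψ ψ' y y₀ :=
  calc θ * B (x - x') (y - y₀) ≤ θ * |B (x - x') (y - y₀)| := by gcongr; exact le_abs_self _
    _ ≤ |B (x - x') (y - y₀)| := mul_le_of_le_one_left (abs_nonneg _) hθ1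
    _ ≤ 1 / τ * (1 / 2 * ‖x - x'‖ ^ 2) + 1 / σ * (1 / 2 * ‖y - y₀‖ ^ 2) :=
      abs_bilin_le_of_sq_mul_le_one hB hτ hσ hM _ _
    _ ≤ 1 / τ * bregmanDiv φ φ' x' x + 1 / σ * bregmanDiv ψ ψ' y y₀ := by
      rw [norm_sub_rev x x']
      gcongr
      · exact hφ.half_sq_norm_sub_le x' hx' x hx
      · exact hψ.half_sq_norm_sub_le y hy y₀ hy₀

variable {S G : Set X} {R H : Set Z} {γ M : ℝ} {θ τ σ : ℕ → ℝ} {u : ℕ → X} {v : ℕ → Z}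
  {x : X} {y : Z}

theorem acceleratedPDHG_weighted_gap_le
    (hφ : IsBregmanKernel φ φ' S) (hψ : IsBregmanKernel ψ ψ' R)
    (hγ : ConvexOn ℝ (G ∩ S) fun z => g z - γ * φ z) (hh : ConvexOn ℝ (H ∩ R) h)
    (hB : ∀ x y, |B x y| ≤ M * ‖x‖ * ‖y‖) (steps : AcceleratedStepSizes γ M θ τ σ)
    (hu : ∀ k, u k ∈ G ∩ interior S) (hv : ∀ k, v k ∈ H ∩ interior R)
    (iter : ∀ k, IsPDHGStep B (G ∩ S) (H ∩ R) g h (bregmanDiv φ φ') (bregmanDiv ψ ψ')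
      (θ k) (τ k) (σ k) (u k) (v (k - 1)) (v k) (u (k + 1)) (v (k + 1)))
    (hx : x ∈ G ∩ S) (hy : y ∈ H ∩ R) (k : ℕ) :
    σ k / σ 0 * (lagrangian B g h (u (k + 1)) y - lagrangian B g h x (v (k + 1))) ≤
      σ k / σ 0 * pdhgEnergy B (bregmanDiv φ φ') (bregmanDiv ψ ψ') (θ k) (τ k) (σ k)
          (u k) (v (k - 1)) (v k) x y -
        σ (k + 1) / σ 0 * pdhgEnergy B (bregmanDiv φ φ') (bregmanDiv ψ ψ') (θ (k + 1)) (τ (k + 1))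
          (σ (k + 1)) (u (k + 1)) (v k) (v (k + 1)) x y := by
  have hdom : G ∩ interior S ⊆ G ∩ S := Set.inter_subset_inter_right G interior_subset
  have hdom' : H ∩ interior R ⊆ H ∩ R := Set.inter_subset_inter_right H interior_subset
  have hτ := steps.tau_pos k
  have hσ := steps.sigma_pos k
  have hθ' := (steps.theta_pos (k + 1)).ne'
  have hcoupling := hφ.mul_bilin_sub_le hψ hB (steps.theta_pos k).le (steps.theta_le_one k) hτ hσ
    (steps.coupling_le_one k) (hu k).2 (hdom (hu (k + 1))).2 (hv (k - 1)).2 (hdom' (hv k)).2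
  have hstep := (iter k).lagrangian_sub_le hτ hγ hh (hdom (hu (k + 1))) (hdom' (hv (k + 1)))
    (hφ.hasLineDerivAt _ (hu (k + 1)).2 _) (hψ.hasLineDerivAt _ (hv (k + 1)).2 _) hcoupling hx hy
  have hrescale := pdhgEnergy_smul (B := B) (θ (k + 1)) 1 (τ k / (1 + γ * τ k)) (σ k)
    (bregmanDiv φ φ') (bregmanDiv ψ ψ') (u (k + 1)) x (v k) (v (k + 1)) y
  rw [mul_one, ← steps.tau_succ_eq_div, ← steps.sigma_succ] at hrescale
  have hweight : σ (k + 1) / σ 0 * θ (k + 1) = σ k / σ 0 := by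
    rw [steps.sigma_succ]; field_simp
  rw [hrescale, ← mul_assoc, hweight, ← mul_sub]
  exact mul_le_mul_of_nonneg_left hstep (div_pos hσ steps.sigma_zero_pos).le

theorem accsc_rate_general
    (hφ : IsBregmanKernel φ φ' S) (hψ : IsBregmanKernel ψ ψ' R) (hR : Convex ℝ R)
    (hg : ConvexOn ℝ G g) (hγ : ConvexOn ℝ (G ∩ S) fun z => g z - γ * φ z) (hh : ConvexOn ℝ H h)
    (hB : ∀ x y, |B x y| ≤ M * ‖x‖ * ‖y‖) (steps : AcceleratedStepSizes γ M θ τ σ)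
    (hu : ∀ k, u k ∈ G ∩ interior S) (hv : ∀ k, v k ∈ H ∩ interior R)
    (iter : ∀ k, IsPDHGStep B (G ∩ S) (H ∩ R) g h (bregmanDiv φ φ') (bregmanDiv ψ ψ')
      (θ k) (τ k) (σ k) (u k) (v (k - 1)) (v k) (u (k + 1)) (v (k + 1)))
    {K : ℕ} (hK : 1 ≤ K) (hx : x ∈ G ∩ S) (hy : y ∈ H ∩ R) :
    (∑ k ∈ Finset.Icc 1 K, σ (k - 1) / σ 0) *
        (lagrangian B g h ((Finset.Icc 1 K).centerMass (fun k => σ (k - 1) / σ 0) u) y -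
          lagrangian B g h x ((Finset.Icc 1 K).centerMass (fun k => σ (k - 1) / σ 0) v)) ≤
      pdhgEnergy B (bregmanDiv φ φ') (bregmanDiv ψ ψ') (θ 0) (τ 0) (σ 0)
          (u 0) (v 0) (v 0) x y -
        σ K / σ 0 * pdhgEnergy B (bregmanDiv φ φ') (bregmanDiv ψ ψ') (θ K) (τ K) (σ K)
          (u K) (v (K - 1)) (v K) x y := by
  have hw (k : ℕ) : 0 < σ (k - 1) / σ 0 := div_pos (steps.sigma_pos _) steps.sigma_zero_pos
  have hw_sum : 0 < ∑ k ∈ Finset.Icc 1 K, σ (k - 1) / σ 0 :=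
    Finset.sum_pos (fun k _ => hw k) (Finset.nonempty_Icc.2 hK)
  have hhR : ConvexOn ℝ (H ∩ R) h := hh.subset Set.inter_subset_left (hh.1.inter hR)
  have htelescope := sum_Icc_le_sub_of_succ_le_sub
    (f := fun k => σ (k - 1) / σ 0 * (lagrangian B g h (u k) y - lagrangian B g h x (v k)))
    (acceleratedPDHG_weighted_gap_le hφ hψ hγ hhR hB steps hu hv iter hx hy) K
  rw [div_self steps.sigma_zero_pos.ne', one_mul] at htelescope
  exact (sum_mul_gap_centerMass_le (convexOn_lagrangian_left hg y)
    (concaveOn_lagrangian_right hh x) (fun k _ => (hw k).le) hw_sum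
    (fun k _ => (hu k).1) (fun k _ => (hv k).1)).trans htelescope

end Convergence

theorem accsc_rate
    {X Y : Type*} [NormedAddCommGroup X] [NormedSpace ℝ X] [CompleteSpace X]
    [NormedAddCommGroup Y] [NormedSpace ℝ Y] [CompleteSpace Y]
    (A : X →L[ℝ] Y)
    (φX : X → ℝ) (SX : Set X) (gX : X → (X →L[ℝ] ℝ))
    (φY : (Y →L[ℝ] ℝ) → ℝ) (SY : Set (Y →L[ℝ] ℝ)) (gY : (Y →L[ℝ] ℝ) → Y)
    (hSXne : SX.Nonempty) (hφXconv : ConvexOn ℝ SX φX)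
    (hφXlsc : LowerSemicontinuousOn φX SX)
    (hSYne : SY.Nonempty) (hφYconv : ConvexOn ℝ SY φY)
    (hφYlsc : LowerSemicontinuousOn φY SY)
    (hφXdiff : ∀ x ∈ interior SX, ∀ w : X,
      HasDerivAt (fun t : ℝ => φX (x + t • w)) (gX x w) 0)
    (hφYdiff : ∀ p ∈ interior SY, ∀ q : Y →L[ℝ] ℝ,
      HasDerivAt (fun t : ℝ => φY (p + t • q)) (q (gY p)) 0)
    (DX : X → X → ℝ) (hDXdef : ∀ x x', DX x x' = φX x - φX x' - gX x' (x - x'))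
    (DY : (Y →L[ℝ] ℝ) → (Y →L[ℝ] ℝ) → ℝ)
    (hDYdef : ∀ p q, DY p q = φY p - φY q - (p - q) (gY q))
    (hscX : ∀ x ∈ SX, ∀ x' ∈ interior SX, (1/2) * ‖x - x'‖ ^ 2 ≤ DX x x')
    (hscY : ∀ p ∈ SY, ∀ q ∈ interior SY, (1/2) * ‖p - q‖ ^ 2 ≤ DY p q)
    (g : X → ℝ) (Sg : Set X) (hSgne : Sg.Nonempty)
    (hgconv : ConvexOn ℝ Sg g) (hglsc : LowerSemicontinuousOn g Sg)
    (hst : (Y →L[ℝ] ℝ) → ℝ) (Sh : Set (Y →L[ℝ] ℝ)) (hShne : Sh.Nonempty)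
    (hhconv : ConvexOn ℝ Sh hst) (hhlsc : LowerSemicontinuousOn hst Sh)
    (L : X → (Y →L[ℝ] ℝ) → ℝ) (hLdef : ∀ x p, L x p = g x + p (A x) - hst p)
    (γg : ℝ) (hγg : 0 < γg)
    (hA6 : ConvexOn ℝ (Sg ∩ SX) (fun x => g x - γg * φX x))
    (hAne : A ≠ 0)
    (θ τ σ : ℕ → ℝ) (hθ0 : 0 < θ 0 ∧ θ 0 ≤ 1) (hσ0 : 0 < σ 0)
    (hτ0 : τ 0 = 1 / (‖A‖ ^ 2 * σ 0))
    (hθrec : ∀ k : ℕ, θ (k+1) = 1 / Real.sqrt (1 + γg * τ k))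
    (hτrec : ∀ k : ℕ, τ (k+1) = θ (k+1) * τ k)
    (hσrec : ∀ k : ℕ, σ (k+1) = σ k / θ (k+1))
    (u : ℕ → X) (v : ℕ → (Y →L[ℝ] ℝ))
    (hu : ∀ k, u k ∈ Sg ∩ interior SX)
    (hv : ∀ k, v k ∈ Sh ∩ interior SY)
    (hstepx : ∀ k : ℕ, ∀ x ∈ Sg ∩ SX,
      g (u (k+1)) + (v k + θ k • (v k - v (k-1))) (A (u (k+1)))
          + (1/τ k) * DX (u (k+1)) (u k) ≤
        g x + (v k + θ k • (v k - v (k-1))) (A x) + (1/τ k) * DX x (u k))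
    (hstepy : ∀ k : ℕ, ∀ p ∈ Sh ∩ SY,
      -hst p + p (A (u (k+1))) - (1/σ k) * DY p (v k) ≤
        -hst (v (k+1)) + (v (k+1)) (A (u (k+1))) - (1/σ k) * DY (v (k+1)) (v k))
    (Δ : ℕ → X → (Y →L[ℝ] ℝ) → ℝ)
    (hΔdef : ∀ (k : ℕ) (x : X) (p : Y →L[ℝ] ℝ),
      Δ k x p = (1/τ k) * DX x (u k) + (1/σ k) * DY p (v k)
        + (1/σ k) * DY (v k) (v (k-1)) + θ k * ((v k - v (k-1)) (A (x - u k))))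
    (T : ℕ → ℝ) (hT : ∀ K : ℕ, T K = ∑ k ∈ Finset.Icc 1 K, σ (k-1) / σ 0)
    (XK : ℕ → X) (YK : ℕ → (Y →L[ℝ] ℝ))
    (hXK : ∀ K : ℕ, XK K = (T K)⁻¹ • ∑ k ∈ Finset.Icc 1 K, (σ (k-1) / σ 0) • u k)
    (hYK : ∀ K : ℕ, YK K = (T K)⁻¹ • ∑ k ∈ Finset.Icc 1 K, (σ (k-1) / σ 0) • v k) :
    ∀ K : ℕ, 1 ≤ K → ∀ x ∈ Sg ∩ SX, ∀ p ∈ Sh ∩ SY,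
      T K * (L (XK K) p - L x (YK K)) ≤ Δ 0 x p - (σ K / σ 0) * Δ K x p := by
  intro K hK x hx p hp
  let pairing : Y →ₗ[ℝ] (Y →L[ℝ] ℝ) →ₗ[ℝ] ℝ := (ContinuousLinearMap.coeLM ℝ).flip
  let B : X →ₗ[ℝ] (Y →L[ℝ] ℝ) →ₗ[ℝ] ℝ := pairing ∘ₗ A.toLinearMap
  have hB (x : X) (p : Y →L[ℝ] ℝ) : |B x p| ≤ ‖A‖ * ‖x‖ * ‖p‖ :=
    (p.le_of_opNorm_le_of_le le_rfl (A.le_opNorm x)).trans_eq (mul_comm _ _)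
  obtain rfl : DX = bregmanDiv φX fun x => (gX x).toLinearMap := funext₂ hDXdef
  obtain rfl : DY = bregmanDiv φY fun q => pairing (gY q) := funext₂ hDYdef
  obtain rfl : L = lagrangian B g hst := funext₂ hLdef
  have hden : 0 < ‖A‖ ^ 2 * σ 0 := mul_pos (pow_pos (norm_pos_iff.2 hAne) 2) hσ0
  have steps : AcceleratedStepSizes γg ‖A‖ θ τ σ :=
    ⟨hγg.le, hθ0.1, hθ0.2, hτ0 ▸ one_div_pos.2 hden, hσ0,
      (hτ0 ▸ mul_one_div_cancel hden.ne').le, hθrec, hτrec, hσrec⟩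
  rw [hXK, hYK, hT, hΔdef, hΔdef]
  exact accsc_rate_general ⟨hφXdiff, hscX⟩ ⟨hφYdiff, hscY⟩ hφYconv.1 hgconv hA6 hhconv hB steps
    hu hv (fun k => ⟨hstepx k, hstepy k⟩) hK hx hp
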